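/- Progress: If a statement S is well-typed under the empty context, i.e., ∅ ⊢ S ⇒ Γ' for some output context Γ', then for every store σ, either S is skip or there exist S' and σ' such that ⟨S, σ⟩ ↝ ⟨S', σ'⟩. -/

import Mathlib

inductive Ty : Type
  | int
  | bool
deriving DecidableEq

inductive Expr : Type
  | int (n : ℤ)
  | tt
  | ff
  | var (x : String)
  | plus (e₁ e₂ : Expr)
  | isOp (e₁ e₂ : Expr)

inductive Val : Type
  | int (n : ℤ)
  | bool (b : Bool)

/-- A value has a type: integer values have type `Int`, booleans have type `Bool`. -/
inductive ValHasTy : Val → Ty → Prop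
  | int (n : ℤ) : ValHasTy (.int n) .int
  | bool (b : Bool) : ValHasTy (.bool b) .bool

/-- Typing contexts: finite maps from variables to types. -/
def Ctx : Type := String → Option Ty

/-- Stores: partial maps from variables to values. -/
def Store : Type := String → Option Val

/-- Expression typing `Γ ⊢ e : τ`. -/
inductive HasTy : Ctx → Expr → Ty → Prop
  | int (Γ : Ctx) (n : ℤ) : HasTy Γ (.int n) .int
  | tt (Γ : Ctx) : HasTy Γ .tt .bool
  | ff (Γ : Ctx) : HasTy Γ .ff .bool
  | var (Γ : Ctx) (x : String) (τ : Ty) : Γ x = some τ → HasTy Γ (.var x) τ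
  | plus (Γ : Ctx) (e₁ e₂ : Expr) :
      HasTy Γ e₁ .int → HasTy Γ e₂ .int → HasTy Γ (.plus e₁ e₂) .int
  | rel (Γ : Ctx) (e₁ e₂ : Expr) (τ : Ty) :
      HasTy Γ e₁ τ → HasTy Γ e₂ τ → HasTy Γ (.isOp e₁ e₂) .bool

inductive Stmt : Type
  | skip
  | letBe (x : String) (e : Expr)
  | ifThenElse (e : Expr) (s₁ s₂ : Stmt)
  | print (e : Expr)
  | seq (s₁ s₂ : Stmt)

/-- Statement typing `Γ ⊢ S ⇒ Γ'`. -/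
inductive StmtTy : Ctx → Stmt → Ctx → Prop
  | skip (Γ : Ctx) : StmtTy Γ .skip Γ
  | letBe (Γ : Ctx) (x : String) (e : Expr) (τ : Ty) :
      HasTy Γ e τ → StmtTy Γ (.letBe x e) (fun y => if y = x then some τ else Γ y)
  | ifThenElse (Γ : Ctx) (e : Expr) (s₁ s₂ : Stmt) :
      HasTy Γ e .bool → StmtTy Γ s₁ Γ → StmtTy Γ s₂ Γ →
      StmtTy Γ (.ifThenElse e s₁ s₂) Γ
  | print (Γ : Ctx) (e : Expr) (τ : Ty) : HasTy Γ e τ → StmtTy Γ (.print e) Γ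
  | seq (Γ Γ' Γ'' : Ctx) (s₁ s₂ : Stmt) :
      StmtTy Γ s₁ Γ' → StmtTy Γ' s₂ Γ'' → StmtTy Γ (.seq s₁ s₂) Γ''

/-- Big-step expression evaluation `σ ⊢ e ⇓ v`. -/
inductive Eval : Store → Expr → Val → Prop
  | int (σ : Store) (n : ℤ) : Eval σ (.int n) (.int n)
  | tt (σ : Store) : Eval σ .tt (.bool true)
  | ff (σ : Store) : Eval σ .ff (.bool false)
  | var (σ : Store) (x : String) (v : Val) : σ x = some v → Eval σ (.var x) v
  | plus (σ : Store) (e₁ e₂ : Expr) (n₁ n₂ : ℤ) :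
      Eval σ e₁ (.int n₁) → Eval σ e₂ (.int n₂) →
      Eval σ (.plus e₁ e₂) (.int (n₁ + n₂))
  | isInt (σ : Store) (e₁ e₂ : Expr) (n₁ n₂ : ℤ) :
      Eval σ e₁ (.int n₁) → Eval σ e₂ (.int n₂) →
      Eval σ (.isOp e₁ e₂) (.bool (n₁ == n₂))
  | isBool (σ : Store) (e₁ e₂ : Expr) (b₁ b₂ : Bool) :
      Eval σ e₁ (.bool b₁) → Eval σ e₂ (.bool b₂) →
      Eval σ (.isOp e₁ e₂) (.bool (b₁ == b₂))

/-- Small-step statement semantics `⟨S, σ⟩ ↝ ⟨S', σ'⟩`. -/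
inductive Step : Stmt → Store → Stmt → Store → Prop
  | letBe (σ : Store) (x : String) (e : Expr) (v : Val) :
      Eval σ e v → Step (.letBe x e) σ .skip (fun y => if y = x then some v else σ y)
  | ifTrue (σ : Store) (e : Expr) (s₁ s₂ : Stmt) :
      Eval σ e (.bool true) → Step (.ifThenElse e s₁ s₂) σ s₁ σ
  | ifFalse (σ : Store) (e : Expr) (s₁ s₂ : Stmt) :
      Eval σ e (.bool false) → Step (.ifThenElse e s₁ s₂) σ s₂ σ
  | print (σ : Store) (e : Expr) (v : Val) : Eval σ e v → Step (.print e) σ .skip σ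
  | seqSkip (σ : Store) (s₂ : Stmt) : Step (.seq .skip s₂) σ s₂ σ
  | seqStep (σ σ' : Store) (s₁ s₁' s₂ : Stmt) :
      Step s₁ σ s₁' σ' → Step (.seq s₁ s₂) σ (.seq s₁' s₂) σ'

/-- `σ ⊨ Γ`: the store is well-typed for the context. -/
def StoreTy (σ : Store) (Γ : Ctx) : Prop :=
  ∀ x τ, Γ x = some τ → ∃ v, σ x = some v ∧ ValHasTy v τ

/-- The empty typing context. -/
def emptyCtx : Ctx := fun _ => none

theorem eval_total (σ : Store) (Γ : Ctx) (hσ : StoreTy σ Γ) (e : Expr) (τ : Ty)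
    (h : HasTy Γ e τ) : ∃ v, Eval σ e v ∧ ValHasTy v τ := by
  induction h with
  | int n => exact ⟨_, .int σ n, .int n⟩
  | tt => exact ⟨_, .tt σ, .bool _⟩
  | ff => exact ⟨_, .ff σ, .bool _⟩
  | var x τ hx =>
    obtain ⟨v, hv, ht⟩ := hσ x τ hx
    exact ⟨v, .var σ x v hv, ht⟩
  | plus e₁ e₂ _ _ ih₁ ih₂ =>
    obtain ⟨_, h₁, t₁⟩ := ih₁
    obtain ⟨_, h₂, t₂⟩ := ih₂
    cases t₁
    cases t₂
    exact ⟨_, .plus σ _ _ _ _ h₁ h₂, .int _⟩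
  | rel e₁ e₂ τ _ _ ih₁ ih₂ =>
    obtain ⟨v₁, h₁, t₁⟩ := ih₁
    obtain ⟨v₂, h₂, t₂⟩ := ih₂
    cases t₁ <;> cases t₂
    · exact ⟨_, .isInt σ _ _ _ _ h₁ h₂, .bool _⟩
    · exact ⟨_, .isBool σ _ _ _ _ h₁ h₂, .bool _⟩

theorem progress_gen (S : Stmt) (Γ Γ' : Ctx) (h : StmtTy Γ S Γ') (σ : Store)
    (hσ : StoreTy σ Γ) : S = .skip ∨ ∃ S' σ', Step S σ S' σ' := by
  induction h with
  | skip Γ => exact .inl rfl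
  | letBe Γ x e τ he =>
    obtain ⟨v, hv, _⟩ := eval_total σ Γ hσ e τ he
    exact .inr ⟨_, _, .letBe σ x e v hv⟩
  | ifThenElse Γ e s₁ s₂ he _ _ _ _ =>
    obtain ⟨_, hv, t⟩ := eval_total σ Γ hσ e _ he
    cases t
    rename_i b
    cases b
    · exact .inr ⟨_, _, .ifFalse σ e s₁ s₂ hv⟩
    · exact .inr ⟨_, _, .ifTrue σ e s₁ s₂ hv⟩
  | print Γ e τ he =>
    obtain ⟨v, hv, _⟩ := eval_total σ Γ hσ e τ he
    exact .inr ⟨_, _, .print σ e v hv⟩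
  | seq Γ Γ' Γ'' s₁ s₂ _ _ ih₁ _ =>
    rcases ih₁ hσ with rfl | ⟨s', σ', hs⟩
    · exact .inr ⟨_, _, .seqSkip σ s₂⟩
    · exact .inr ⟨_, _, .seqStep σ σ' s₁ s' s₂ hs⟩

/-- **Progress**: a statement well-typed under the empty context is either `skip`
or can take a step from any store. -/
theorem progress (S : Stmt) (Γ' : Ctx) (h : StmtTy emptyCtx S Γ') :
    ∀ σ : Store, S = .skip ∨ ∃ S' σ', Step S σ S' σ' := by
  intro σ
  refine progress_gen S emptyCtx Γ' h σ ?_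
  intro x τ hx
  simp [emptyCtx] at hx
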